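/- Let (T₀, T̃₀) be a joint pair of closed abstract Friedrichs operators on a complex Hilbert space H, with minimal domain W₀ and graph space W. Then (T₁|_{W₀ + ker T̃₁}, T̃₁|_{W₀ + ker T₁}) is a pair of mutually adjoint bijective realisations relative to (T₀, T̃₀): the two restrictions are adjoint to each other and each is a bijection onto H. -/

import Mathlib

open LinearPMap
open scoped LinearPMap

noncomputable section

variable {H : Type*} [NormedAddCommGroup H] [InnerProductSpace ℂ H] [CompleteSpace H]

local notation "⟪" x ", " y "⟫" => @inner ℂ _ _ x y

/-- Conditions (T1)–(T2) for a pair of operators with common dense domain. -/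
structure IsPreFriedrichsPair (T Tt : H →ₗ.[ℂ] H) : Prop where
  dom_eq : T.domain = Tt.domain
  dense' : Dense (T.domain : Set H)
  t1 : ∀ (φ : T.domain) (ψ : Tt.domain), ⟪T φ, (ψ : H)⟫ = ⟪(φ : H), Tt ψ⟫
  t2 : ∃ c : ℝ, 0 < c ∧ ∀ φ : (T + Tt).domain, ‖(T + Tt) φ‖ ≤ c * ‖(φ : H)‖

/-- A joint pair of abstract Friedrichs operators: (T1)–(T3). -/
structure IsFriedrichsPair (T Tt : H →ₗ.[ℂ] H) extends IsPreFriedrichsPair T Tt : Prop where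
  t3 : ∃ μ₀ : ℝ, 0 < μ₀ ∧ ∀ φ : (T + Tt).domain,
        2 * μ₀ * ‖(φ : H)‖ ^ 2 ≤ (⟪(T + Tt) φ, (φ : H)⟫).re

/-- The kernel of a partially defined operator, as a submodule of the ambient space. -/
def pKer (f : H →ₗ.[ℂ] H) : Submodule ℂ H :=
  (LinearMap.ker f.toFun).map f.domain.subtype

/-- `(T₁|_V, T̃₁|_Ṽ)` is a pair of mutually adjoint bijective realisations relative to the
closed pair `(T₀, T̃₀)`, where `T₁ := T̃₀*`, `T̃₁ := T₀*`. -/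
def MABPair (T Tt : H →ₗ.[ℂ] H) (V Vt : Submodule ℂ H) : Prop :=
  T.domain ≤ V ∧ V ≤ (Tt†).domain ∧ Tt.domain ≤ Vt ∧ Vt ≤ (T†).domain ∧
  ((Tt†).domRestrict V)† = (T†).domRestrict Vt ∧
  ((T†).domRestrict Vt)† = (Tt†).domRestrict V ∧
  Function.Bijective (fun x : ((Tt†).domRestrict V).domain => ((Tt†).domRestrict V) x) ∧
  Function.Bijective (fun x : ((T†).domRestrict Vt).domain => ((T†).domRestrict Vt) x)

/-!
Condition (T2) lets `T + T̃` extend to a bounded symmetric operator `S` on `H`, coercive by (T3),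
and testing against `W₀` shows that `T₁` acts on `W₀ + ker T̃₁` by `u + ν ↦ T₀ u + S ν`.
Coercivity also makes `T₀` bounded below, so its range is closed with orthogonal complement
`ker T̃₁`; Lax–Milgram for the compression of `S` to `ker T̃₁` then solves `T₀ u + S ν = f`
for every `f`. By symmetry of `S` the two realisations are formally adjoint to each other, and
formally adjoint surjective operators are automatically injective and mutually adjoint.
-/

section FormalAdjoint

variable {𝕜 E F : Type*} [RCLike 𝕜] [NormedAddCommGroup E] [InnerProductSpace 𝕜 E]
  [NormedAddCommGroup F] [InnerProductSpace 𝕜 F] {A : E →ₗ.[𝕜] F} {B : F →ₗ.[𝕜] E}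

theorem injective_of_isFormalAdjoint_of_surjective (h : A.IsFormalAdjoint B)
    (hB : Function.Surjective B) : Function.Injective A := fun x y hxy =>
  Subtype.ext <| hB.denseRange.eq_of_inner_left 𝕜 fun z => by rw [← h, ← h, hxy]

theorem isFormalAdjoint_add_self {A B : E →ₗ.[𝕜] E} (h : A.IsFormalAdjoint B) :
    (A + B).IsFormalAdjoint (A + B) := by
  rintro ⟨x, hxA, hxB⟩ ⟨y, hyA, hyB⟩
  have hA : inner 𝕜 (A ⟨x, hxA⟩) y = inner 𝕜 x (B ⟨y, hyB⟩) := h ⟨x, hxA⟩ ⟨y, hyB⟩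
  have hB : inner 𝕜 (B ⟨x, hxB⟩) y = inner 𝕜 x (A ⟨y, hyA⟩) := h.symm ⟨x, hxB⟩ ⟨y, hyA⟩
  calc inner 𝕜 (A ⟨x, hxA⟩ + B ⟨x, hxB⟩) y
      = inner 𝕜 x (A ⟨y, hyA⟩ + B ⟨y, hyB⟩) := by
        rw [inner_add_left, inner_add_right, hA, hB, add_comm]

variable [CompleteSpace E]

theorem dense_domain_of_isFormalAdjoint_of_surjective (h : A.IsFormalAdjoint B)
    (hA : Function.Surjective A) (hB : Function.Surjective B) : Dense (A.domain : Set E) := by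
  rw [Submodule.dense_iff_topologicalClosure_eq_top, Submodule.topologicalClosure_eq_top_iff,
    Submodule.eq_bot_iff]
  intro x hx
  obtain ⟨y, rfl⟩ := hB x
  have hy : (y : F) = 0 := hA.denseRange.eq_zero_of_inner_right 𝕜 fun z => by
    rw [h, Submodule.inner_right_of_mem_orthogonal z.2 hx]
  rw [show y = 0 from Subtype.ext hy, LinearPMap.map_zero]

theorem adjoint_eq_of_isFormalAdjoint_of_surjective (h : A.IsFormalAdjoint B)
    (hA : Function.Surjective A) (hB : Function.Surjective B) : A† = B := by
  have hdense := dense_domain_of_isFormalAdjoint_of_surjective h hA hB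
  have hle : B ≤ A† := h.le_adjoint hdense
  have hinj : Function.Injective A† :=
    injective_of_isFormalAdjoint_of_surjective (adjoint_isFormalAdjoint hdense) hA
  refine (eq_of_le_of_domain_eq hle (le_antisymm hle.1 fun x hx => ?_)).symm
  obtain ⟨y, hy⟩ := hB (A† ⟨x, hx⟩)
  have hyx : (⟨y, hle.1 y.2⟩ : A†.domain) = ⟨x, hx⟩ := hinj ((hle.2 rfl).symm.trans hy)
  have hyx' : (y : F) = x := congrArg Subtype.val hyx
  exact hyx' ▸ y.2

theorem mem_graph_adjoint_iff (hA : Dense (A.domain : Set E)) {y : F} {w : E} :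
    (y, w) ∈ A†.graph ↔ ∀ x : A.domain, inner 𝕜 w (x : E) = inner 𝕜 y (A x) := by
  rw [mem_graph_iff]
  constructor
  · rintro ⟨y, rfl, rfl⟩ x
    exact adjoint_isFormalAdjoint hA y x
  · intro h
    exact ⟨⟨y, mem_adjoint_domain_of_exists y ⟨w, h⟩⟩, rfl, adjoint_apply_eq hA _ h⟩

end FormalAdjoint

theorem isClosed_range_of_norm_le_mul_norm {𝕜 E F : Type*} [NontriviallyNormedField 𝕜]
    [NormedAddCommGroup E] [NormedSpace 𝕜 E] [CompleteSpace E]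
    [NormedAddCommGroup F] [NormedSpace 𝕜 F] [CompleteSpace F] {T : E →ₗ.[𝕜] F} (hT : T.IsClosed)
    {C : ℝ} (hC : ∀ x : T.domain, ‖(x : E)‖ ≤ C * ‖T x‖) :
    IsClosed (LinearMap.range T.toFun : Set F) := by
  have : CompleteSpace T.graph := IsClosed.completeSpace_coe (hs := hT)
  let snd : T.graph →L[𝕜] F := (ContinuousLinearMap.snd 𝕜 E F).comp T.graph.subtypeL
  have hsnd : AntilipschitzWith (max C 1).toNNReal snd := by
    refine snd.antilipschitz_of_bound ?_
    rintro ⟨_, hxy⟩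
    obtain ⟨x, rfl⟩ := T.mem_graph_iff'.1 hxy
    rw [Real.coe_toNNReal _ (le_max_of_le_right zero_le_one)]
    change max ‖(x : E)‖ ‖T x‖ ≤ max C 1 * ‖T x‖
    rw [max_mul_of_nonneg _ _ (norm_nonneg _), one_mul]
    exact max_le_max_right _ (hC x)
  have hrange : (LinearMap.range T.toFun : Set F) = Set.range snd := by
    ext y
    simp [snd]
  exact hrange ▸ hsnd.isClosed_range snd.uniformContinuous

/-- Lax–Milgram for the compression of `S` to `K`. -/
theorem exists_mem_sub_apply_mem_orthogonal {𝕜 E : Type*} [RCLike 𝕜] [NormedAddCommGroup E]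
    [InnerProductSpace 𝕜 E] {K : Submodule 𝕜 E} [CompleteSpace K] {S : E →L[𝕜] E}
    {c : ℝ} (hc : 0 < c) (hS : ∀ x ∈ K, c * ‖x‖ ^ 2 ≤ ‖inner 𝕜 (S x) x‖) (f : E) :
    ∃ x ∈ K, f - S x ∈ Kᗮ := by
  let B : K →L[𝕜] K := K.orthogonalProjectionOnto.comp (S.comp K.subtypeL)
  have hB : IsUnit B := by
    refine B.isUnit_of_forall_le_norm_inner_map (c := ⟨c, hc.le⟩) hc fun x => ?_
    calc ‖x‖ ^ 2 * c = c * ‖(x : E)‖ ^ 2 := mul_comm _ _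
      _ ≤ ‖inner 𝕜 (S x) (x : E)‖ := hS x x.2
      _ = ‖inner 𝕜 (B x) x‖ := by
        rw [← Submodule.inner_orthogonalProjectionOnto_eq_of_mem_right x (S x)]
        rfl
  obtain ⟨x, hx⟩ := (ContinuousLinearMap.isUnit_iff_bijective.1 hB).2 (K.orthogonalProjectionOnto f)
  refine ⟨x, x.2, ?_⟩
  rw [← Submodule.orthogonalProjectionOnto_eq_zero_iff, _root_.map_sub, sub_eq_zero]
  exact hx.symm

section BoundedExtension

variable {𝕜 E F : Type*} [NontriviallyNormedField 𝕜] [NormedAddCommGroup E] [NormedSpace 𝕜 E]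
  [NormedAddCommGroup F] [NormedSpace 𝕜 F] [CompleteSpace F]

/-- The extension to the whole space of a densely defined bounded operator. It has a junk value
unless the domain is dense and the operator is bounded. -/
def boundedExtension (f : E →ₗ.[𝕜] F) : E →L[𝕜] F :=
  f.toFun.extendOfNorm f.domain.subtype

theorem boundedExtension_apply {f : E →ₗ.[𝕜] F} (hdense : Dense (f.domain : Set E))
    (hbound : ∃ C, ∀ x : f.domain, ‖f x‖ ≤ C * ‖(x : E)‖) (x : f.domain) :
    boundedExtension f x = f x :=
  LinearMap.extendOfNorm_eq hdense.denseRange_val hbound x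

end BoundedExtension

section InnerBoundedExtension

variable {𝕜 E : Type*} [RCLike 𝕜] [NormedAddCommGroup E] [InnerProductSpace 𝕜 E] [CompleteSpace E]
  {f : E →ₗ.[𝕜] E}

theorem inner_boundedExtension_left (hdense : Dense (f.domain : Set E))
    (hbound : ∃ C, ∀ x : f.domain, ‖f x‖ ≤ C * ‖(x : E)‖)
    (hf : f.IsFormalAdjoint f) (x y : E) :
    inner 𝕜 (boundedExtension f x) y = inner 𝕜 x (boundedExtension f y) := by
  induction x using hdense.induction with
  | mem x hx =>
    induction y using hdense.induction with
    | mem y hy =>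
      rw [boundedExtension_apply hdense hbound ⟨x, hx⟩,
        boundedExtension_apply hdense hbound ⟨y, hy⟩]
      exact hf ⟨x, hx⟩ ⟨y, hy⟩
    | isClosed => exact isClosed_eq (by fun_prop) (by fun_prop)
  | isClosed => exact isClosed_eq (by fun_prop) (by fun_prop)

theorem le_re_inner_boundedExtension (hdense : Dense (f.domain : Set E))
    (hbound : ∃ C, ∀ x : f.domain, ‖f x‖ ≤ C * ‖(x : E)‖) {c : ℝ}
    (hf : ∀ x : f.domain, c * ‖(x : E)‖ ^ 2 ≤ RCLike.re (inner 𝕜 (f x) (x : E))) (x : E) :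
    c * ‖x‖ ^ 2 ≤ RCLike.re (inner 𝕜 (boundedExtension f x) x) := by
  induction x using hdense.induction with
  | mem x hx => exact boundedExtension_apply hdense hbound ⟨x, hx⟩ ▸ hf ⟨x, hx⟩
  | isClosed => exact isClosed_le (by fun_prop) (by fun_prop)

end InnerBoundedExtension

section FriedrichsPair

variable {E : Type*} [NormedAddCommGroup E] [InnerProductSpace ℂ E] {T Tt : E →ₗ.[ℂ] E}

theorem mem_pKer_iff {f : E →ₗ.[ℂ] E} {x : E} : x ∈ pKer f ↔ (x, 0) ∈ f.graph := by
  simp [pKer]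

namespace IsPreFriedrichsPair

theorem symm (h : IsPreFriedrichsPair T Tt) : IsPreFriedrichsPair Tt T where
  dom_eq := h.dom_eq.symm
  dense' := h.dom_eq ▸ h.dense'
  t1 := IsFormalAdjoint.symm h.t1
  t2 := add_comm T Tt ▸ h.t2

theorem dense_domain_add (h : IsPreFriedrichsPair T Tt) : Dense ((T + Tt).domain : Set E) := by
  rw [add_domain, ← h.dom_eq, inf_idem]
  exact h.dense'

theorem exists_norm_add_le (h : IsPreFriedrichsPair T Tt) :
    ∃ c, ∀ φ : (T + Tt).domain, ‖(T + Tt) φ‖ ≤ c * ‖(φ : E)‖ :=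
  h.t2.imp fun _ hc => hc.2

end IsPreFriedrichsPair

namespace IsFriedrichsPair

theorem symm (h : IsFriedrichsPair T Tt) : IsFriedrichsPair Tt T :=
  ⟨h.toIsPreFriedrichsPair.symm, add_comm T Tt ▸ h.t3⟩

theorem exists_norm_le_mul_norm (h : IsFriedrichsPair T Tt) :
    ∃ C : ℝ, ∀ φ : T.domain, ‖(φ : E)‖ ≤ C * ‖T φ‖ := by
  obtain ⟨μ, hμ, hcoer⟩ := h.t3
  refine ⟨μ⁻¹, fun φ => ?_⟩
  have hφ : (φ : E) ∈ Tt.domain := h.dom_eq.le φ.2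
  have hre : (⟪Tt ⟨φ, hφ⟩, (φ : E)⟫).re = (⟪T φ, (φ : E)⟫).re := by
    rw [h.t1 φ ⟨φ, hφ⟩, ← inner_conj_symm, Complex.conj_re]
  have hle : μ * ‖(φ : E)‖ * ‖(φ : E)‖ ≤ ‖T φ‖ * ‖(φ : E)‖ := by
    have hsum : 2 * μ * ‖(φ : E)‖ ^ 2 ≤ (⟪T φ + Tt ⟨φ, hφ⟩, (φ : E)⟫).re := hcoer ⟨φ, φ.2, hφ⟩
    have hcs : (⟪T φ, (φ : E)⟫).re ≤ ‖T φ‖ * ‖(φ : E)‖ := re_inner_le_norm (𝕜 := ℂ) _ _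
    rw [inner_add_left, Complex.add_re, hre] at hsum
    linarith
  rw [le_inv_mul_iff₀ hμ]
  rcases (norm_nonneg (φ : E)).eq_or_lt with hzero | hpos
  · simp [← hzero]
  · exact le_of_mul_le_mul_right hle hpos

end IsFriedrichsPair

end FriedrichsPair

variable {T Tt : H →ₗ.[ℂ] H}

theorem pKer_adjoint (hT : Dense (T.domain : Set H)) :
    pKer (T†) = (LinearMap.range T.toFun)ᗮ := by
  ext ν
  simp only [mem_pKer_iff, mem_graph_adjoint_iff hT, Submodule.mem_orthogonal', inner_zero_left,
    LinearMap.mem_range, forall_exists_index, forall_apply_eq_imp_iff, toFun_eq_coe,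
    eq_comm (a := (0 : ℂ))]

/-- The realisation `T₁|_{W₀ + ker T̃₁}`, where `T₁ = T̃₀*` and `T̃₁ = T₀*`. Exchanging the two
arguments gives `T̃₁|_{W₀ + ker T₁}`. -/
def kerRealisation (T Tt : H →ₗ.[ℂ] H) : H →ₗ.[ℂ] H :=
  (Tt†).domRestrict (T.domain ⊔ pKer (T†))

namespace IsPreFriedrichsPair

theorem inner_boundedExtension_of_mem_pKer (h : IsPreFriedrichsPair T Tt) {ν : H}
    (hν : ν ∈ pKer (T†)) (φ : Tt.domain) :
    ⟪boundedExtension (T + Tt) ν, (φ : H)⟫ = ⟪ν, Tt φ⟫ := by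
  have hφ : (φ : H) ∈ T.domain := h.dom_eq.ge φ.2
  have hTφ : ⟪ν, T ⟨φ, hφ⟩⟫ = 0 := by
    rw [pKer_adjoint h.dense'] at hν
    exact Submodule.inner_left_of_mem_orthogonal (LinearMap.mem_range_self T.toFun _) hν
  calc ⟪boundedExtension (T + Tt) ν, (φ : H)⟫
      = ⟪ν, boundedExtension (T + Tt) φ⟫ := inner_boundedExtension_left h.dense_domain_add
        h.exists_norm_add_le (isFormalAdjoint_add_self h.t1) ν φ
    _ = ⟪ν, T ⟨φ, hφ⟩ + Tt φ⟫ := congrArg _ <|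
        boundedExtension_apply h.dense_domain_add h.exists_norm_add_le ⟨φ, hφ, φ.2⟩
    _ = ⟪ν, Tt φ⟫ := by rw [inner_add_right, hTφ, zero_add]

theorem add_mem_graph_adjoint (h : IsPreFriedrichsPair T Tt) (u : T.domain) {ν : H}
    (hν : ν ∈ pKer (T†)) :
    ((u : H) + ν, T u + boundedExtension (T + Tt) ν) ∈ (Tt†).graph :=
  (mem_graph_adjoint_iff h.symm.dense').2 fun φ => by
    rw [inner_add_left, inner_add_left, h.t1, h.inner_boundedExtension_of_mem_pKer hν]

theorem domain_sup_pKer_le (h : IsPreFriedrichsPair T Tt) :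
    T.domain ⊔ pKer (T†) ≤ (Tt†).domain := by
  intro x hx
  obtain ⟨u, hu, ν, hν, rfl⟩ := Submodule.mem_sup.1 hx
  exact mem_domain_of_mem_graph (h.add_mem_graph_adjoint ⟨u, hu⟩ hν)

theorem exists_eq_add_and_kerRealisation_eq (h : IsPreFriedrichsPair T Tt)
    (x : (kerRealisation T Tt).domain) :
    ∃ u : T.domain, ∃ ν ∈ pKer (T†),
      (x : H) = u + ν ∧ kerRealisation T Tt x = T u + boundedExtension (T + Tt) ν := by
  obtain ⟨u, hu, ν, hν, hx⟩ := Submodule.mem_sup.1 x.2.1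
  have hval := h.add_mem_graph_adjoint ⟨u, hu⟩ hν
  have hx' : ((x : H), kerRealisation T Tt x) ∈ (Tt†).graph :=
    le_graph_of_le domRestrict_le (mem_graph _ x)
  exact ⟨⟨u, hu⟩, ν, hν, hx.symm, mem_graph_snd_inj _ hx' hval hx.symm⟩

theorem add_boundedExtension_mem_range_kerRealisation (h : IsPreFriedrichsPair T Tt)
    (u : T.domain) {ν : H} (hν : ν ∈ pKer (T†)) :
    T u + boundedExtension (T + Tt) ν ∈ Set.range (kerRealisation T Tt) := by
  obtain ⟨x, hx, hval⟩ := (mem_graph_iff _).1 (h.add_mem_graph_adjoint u hν)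
  have hxV : (x : H) ∈ T.domain ⊔ pKer (T†) := hx ▸ Submodule.add_mem_sup u.2 hν
  exact ⟨⟨x, hxV, x.2⟩, (domRestrict_apply rfl).trans hval⟩

theorem isFormalAdjoint_kerRealisation (h : IsPreFriedrichsPair T Tt) :
    (kerRealisation T Tt).IsFormalAdjoint (kerRealisation Tt T) := by
  intro x y
  obtain ⟨u, ν, hν, hx, hAx⟩ := h.exists_eq_add_and_kerRealisation_eq x
  obtain ⟨v, κ, hκ, hy, hAy⟩ := h.symm.exists_eq_add_and_kerRealisation_eq y
  rw [add_comm Tt T] at hAy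
  have huv : ⟪T u, (v : H)⟫ = ⟪(u : H), Tt v⟫ := h.t1 u v
  have huκ : ⟪T u, κ⟫ = ⟪(u : H), boundedExtension (T + Tt) κ⟫ := by
    rw [← inner_conj_symm, ← h.symm.inner_boundedExtension_of_mem_pKer hκ u, inner_conj_symm,
      add_comm Tt T]
  have hνv := h.inner_boundedExtension_of_mem_pKer hν v
  have hνκ := inner_boundedExtension_left h.dense_domain_add h.exists_norm_add_le
    (isFormalAdjoint_add_self h.t1) ν κ
  rw [hx, hAx, hy, hAy]
  simp only [inner_add_left, inner_add_right, huv, huκ, hνv, hνκ]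

end IsPreFriedrichsPair

namespace IsFriedrichsPair

theorem exists_add_boundedExtension_eq (h : IsFriedrichsPair T Tt) (hT : T.IsClosed) (f : H) :
    ∃ u : T.domain, ∃ ν ∈ pKer (T†), T u + boundedExtension (T + Tt) ν = f := by
  obtain ⟨μ, hμ, hcoer⟩ := h.t3
  obtain ⟨C, hC⟩ := h.exists_norm_le_mul_norm
  have : CompleteSpace (LinearMap.range T.toFun) :=
    (isClosed_range_of_norm_le_mul_norm hT hC).completeSpace_coe
  have hS (x : H) : 2 * μ * ‖x‖ ^ 2 ≤ ‖⟪boundedExtension (T + Tt) x, x⟫‖ :=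
    (le_re_inner_boundedExtension h.dense_domain_add h.exists_norm_add_le hcoer x).trans
      (Complex.re_le_norm _)
  obtain ⟨ν, hν, hsub⟩ := exists_mem_sub_apply_mem_orthogonal
    (K := (LinearMap.range T.toFun)ᗮ) (by positivity) (fun x _ => hS x) f
  rw [Submodule.orthogonal_orthogonal] at hsub
  obtain ⟨u, hu⟩ := hsub
  exact ⟨u, ν, pKer_adjoint h.dense' ▸ hν, eq_sub_iff_add_eq.1 hu⟩

theorem surjective_kerRealisation (h : IsFriedrichsPair T Tt) (hT : T.IsClosed) :
    Function.Surjective (kerRealisation T Tt) := by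
  intro f
  obtain ⟨u, ν, hν, rfl⟩ := h.exists_add_boundedExtension_eq hT f
  exact h.add_boundedExtension_mem_range_kerRealisation u hν

end IsFriedrichsPair

/-- For a joint pair `(T₀, T̃₀)` of closed abstract Friedrichs operators,
`(T₁|_{W₀ + ker T̃₁}, T̃₁|_{W₀ + ker T₁})` is a pair of mutually adjoint bijective realisations
relative to `(T₀, T̃₀)`. -/
theorem statement10 (T Tt : H →ₗ.[ℂ] H) (hF : IsFriedrichsPair T Tt)
    (hT : T.IsClosed) (hTt : Tt.IsClosed) :
    MABPair T Tt (T.domain ⊔ pKer (T†)) (Tt.domain ⊔ pKer (Tt†)) := by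
  have hsurj : Function.Surjective (kerRealisation T Tt) := hF.surjective_kerRealisation hT
  have hsurj' : Function.Surjective (kerRealisation Tt T) := hF.symm.surjective_kerRealisation hTt
  have hadj : (kerRealisation T Tt).IsFormalAdjoint (kerRealisation Tt T) :=
    hF.isFormalAdjoint_kerRealisation
  exact ⟨le_sup_left, hF.domain_sup_pKer_le, le_sup_left, hF.symm.domain_sup_pKer_le,
    adjoint_eq_of_isFormalAdjoint_of_surjective hadj hsurj hsurj',
    adjoint_eq_of_isFormalAdjoint_of_surjective hadj.symm hsurj' hsurj,
    ⟨injective_of_isFormalAdjoint_of_surjective hadj hsurj', hsurj⟩,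
    ⟨injective_of_isFormalAdjoint_of_surjective hadj.symm hsurj, hsurj'⟩⟩
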